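/- Let n ≥ 1 and let F, G be coprime completely reducible homogeneous polynomials of the same degree d ≥ 1 in R = MvPolynomial (Fin (n+1)) ℂ such that the generic fiber of the pencil 𝒫 generated by F and G is irreducible. If there exist more than 2 pairwise distinct completely reducible members of 𝒫, then the set of all linear factors of F together with all linear factors of G spans a subspace of dimension at most 5 of the (n+1)-dimensional space of homogeneous degree-1 polynomials (equivalently, 𝒫 is a linear pull-back of a pencil on ℙ⁴). -/

import Mathlib

open MvPolynomial

noncomputable section

/-- A linear form: a nonzero homogeneous polynomial of degree 1. -/
def IsLinearForm (n : ℕ) (α : MvPolynomial (Fin (n + 1)) ℂ) : Prop :=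
  α ≠ 0 ∧ α.IsHomogeneous 1

/-- A completely reducible polynomial: a product of linear forms. -/
def CompletelyReducible (n : ℕ) (P : MvPolynomial (Fin (n + 1)) ℂ) : Prop :=
  ∃ s : Multiset (MvPolynomial (Fin (n + 1)) ℂ),
    (∀ α ∈ s, IsLinearForm n α) ∧ P = s.prod

/-- F and G have no common non-unit factor. -/
def RelPrime (n : ℕ) (F G : MvPolynomial (Fin (n + 1)) ℂ) : Prop :=
  ∀ p : MvPolynomial (Fin (n + 1)) ℂ, p ∣ F → p ∣ G → IsUnit p

/-- The generic fiber of the pencil generated by F and G is irreducible. -/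
def GenericFiberIrreducible (n : ℕ) (F G : MvPolynomial (Fin (n + 1)) ℂ) : Prop :=
  {c : ℂ | ¬ Irreducible (F + C c * G)}.Finite

/-! Choose coordinates in which the `N` variables are spanned by the linear factors of `F` and
`G`, and let `A` be the determinant of the Hessian of `log (F / G)`, multiplied by `(F G) ^ 2`; it
is a form of degree `4 d - 2 N`. It is not zero: otherwise `F / G` would be constant along the lines
in the direction of some vector field, the poles of the logarithmic derivatives along such a line
would cancel, and a nontrivial subproduct of the linear factors would give a constant fraction,
against coprimality. If `H = p F + q G` with `p, q ≠ 0`, the fractional linear change of `F / G` to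
`H / G` multiplies the Hessian determinant by `(p F / H) ^ N`, so if `H` is a product of linear
forms as well, then `H ^ (N - 2)` divides `A`. Hence `d (N - 2) ≤ 4 d - 2 N`, which forces `N ≤ 5`.
-/

section Jacobian

variable {k K ι : Type*} [CommRing k] [CommRing K] [Algebra k K] (D : ι → Derivation k K K)

/-- The matrix of first derivatives of the components of `e`; rows are indexed by the frame `D`. -/
def jacobian (e : ι → K) : Matrix ι ι K := Matrix.of fun i j => D i (e j)

lemma jacobian_apply (e : ι → K) (i j : ι) : jacobian D e i j = D i (e j) := rfl

variable [Fintype ι]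

/-- The derivation `∑ i, v i • D i` along the vector field with components `v` in the frame `D`. -/
def dirDeriv (v : ι → K) : Derivation k K K := ∑ i, v i • D i

lemma dirDeriv_apply (v : ι → K) (y : K) : dirDeriv D v y = ∑ i, v i * D i y := by
  rw [dirDeriv, ← Derivation.coeFnAddMonoidHom_apply, map_sum, Finset.sum_apply]
  rfl

variable {D}

lemma dirDeriv_comp_eq_jacobian_mulVec {e : ι → K} (hsymm : (jacobian D e).IsSymm) (v : ι → K) :
    (fun j => dirDeriv D v (e j)) = (jacobian D e).mulVec v := by
  ext j
  rw [dirDeriv_apply, Matrix.mulVec, dotProduct]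
  exact Finset.sum_congr rfl fun i _ => by rw [← hsymm.apply, jacobian_apply, mul_comm]

/-- Differentiating `J v = 0` along `v` gives `J (v · v) = 0`: the remaining term is
`∑ k, v k • dirDeriv v (J i k)`, which is rewritten through the symmetry of the second derivatives
as a combination of the entries of `J v`. -/
lemma jacobian_mulVec_dirDeriv_eq_zero (hcomm : ∀ i j y, D i (D j y) = D j (D i y)) {e : ι → K}
    (hsymm : (jacobian D e).IsSymm) {v : ι → K} (hv : (jacobian D e).mulVec v = 0) :
    (jacobian D e).mulVec (fun j => dirDeriv D v (v j)) = 0 := by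
  have hker : ∀ i, ∑ j, D i (e j) * v j = 0 := fun i => congrFun hv i
  have hdir : ∀ j, dirDeriv D v (e j) = 0 := fun j =>
    (congrFun (dirDeriv_comp_eq_jacobian_mulVec hsymm v) j).trans (congrFun hv j)
  have hentry : ∀ i j, dirDeriv D v (D i (e j)) = -∑ m, D i (v m) * D m (e j) := by
    intro i j
    have h := congrArg (D i) (hdir j)
    simp only [dirDeriv_apply, map_sum, Derivation.leibniz, smul_eq_mul, map_zero,
      Finset.sum_add_distrib] at h ⊢
    rw [eq_neg_iff_add_eq_zero, ← h]
    congr 1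
    · exact Finset.sum_congr rfl fun m _ => by rw [hcomm]
    · exact Finset.sum_congr rfl fun m _ => mul_comm _ _
  have hcross : ∀ i, ∑ j, v j * dirDeriv D v (D i (e j)) = 0 := by
    intro i
    simp only [hentry, mul_neg, Finset.mul_sum, Finset.sum_neg_distrib]
    rw [Finset.sum_comm, neg_eq_zero]
    refine Finset.sum_eq_zero fun m _ => ?_
    rw [← mul_zero (D i (v m)), ← hker m, Finset.mul_sum]
    exact Finset.sum_congr rfl fun j _ => by ring
  ext i
  have h := congrArg (dirDeriv D v) (hker i)
  simp only [map_sum, Derivation.leibniz, smul_eq_mul, map_zero, Finset.sum_add_distrib,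
    hcross, add_zero] at h
  exact h

lemma dirDeriv_comm_of_coordinates [DecidableEq ι] (hcomm : ∀ i j y, D i (D j y) = D j (D i y))
    {x : ι → K} (hx : ∀ i j, D i (x j) = (Pi.single j 1 : ι → K) i) (i : ι) (y : K) :
    dirDeriv D x (D i y) = D i (dirDeriv D x y) - D i y := by
  simp only [dirDeriv_apply, map_sum, Derivation.leibniz, hx, smul_eq_mul,
    Finset.sum_add_distrib, Pi.single_apply, mul_ite, mul_one, mul_zero, Finset.sum_ite_eq,
    Finset.mem_univ, if_true, add_sub_cancel_right]
  exact Finset.sum_congr rfl fun j _ => by rw [hcomm]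

end Jacobian

section FlatKernel

variable {k K ι : Type*} [CommRing k] [Field K] [Algebra k K]

/-- A vector of minimal support, scaled to have an entry `1`: its image under `E` has strictly
smaller support. -/
lemma exists_mem_ne_zero_forall_derivation_eq_zero [Finite ι] {V : Submodule K (ι → K)}
    (hV : V ≠ ⊥) :
    ∃ v ∈ V, v ≠ 0 ∧ ∀ E : Derivation k K K, (fun j => E (v j)) ∈ V → (fun j => E (v j)) = 0 := by
  classical
  cases nonempty_fintype ι
  obtain ⟨u, ⟨huV, hu0⟩, hmin⟩ :=
    exists_minimalFor_of_wellFoundedLT (fun v : ι → K => v ∈ V ∧ v ≠ 0)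
      (fun v => Finset.univ.filter fun j => v j ≠ 0) (V.ne_bot_iff.mp hV)
  obtain ⟨j₀, hj₀⟩ := Function.ne_iff.mp hu0
  refine ⟨(u j₀)⁻¹ • u, V.smul_mem _ huV, smul_ne_zero (inv_ne_zero hj₀) hu0, fun E hE => ?_⟩
  by_contra hne
  have hsub : (Finset.univ.filter fun j => E (((u j₀)⁻¹ • u) j) ≠ 0) ⊆
      Finset.univ.filter fun j => u j ≠ 0 := by
    intro j
    simp only [Finset.mem_filter_univ]
    exact mt fun h => by rw [Pi.smul_apply, h, smul_zero, map_zero]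
  have hj₀' := hmin ⟨hE, hne⟩ hsub ((Finset.mem_filter_univ j₀).mpr hj₀)
  refine (Finset.mem_filter_univ j₀).mp hj₀' ?_
  change E ((u j₀)⁻¹ * u j₀) = 0
  rw [inv_mul_cancel₀ hj₀, Derivation.map_one_eq_zero]

variable [Fintype ι] {D : ι → Derivation k K K}

/-- The kernel of a Hessian is spanned by directions along which it is constant; this is the
algebraic form of the linearity of the fibers of a degenerate gradient map. -/
lemma exists_flat_vector_of_det_jacobian_eq_zero [DecidableEq ι]
    (hcomm : ∀ i j y, D i (D j y) = D j (D i y)) {e : ι → K}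
    (hsymm : (jacobian D e).IsSymm) (hdet : (jacobian D e).det = 0) :
    ∃ v ≠ 0, (jacobian D e).mulVec v = 0 ∧ ∀ j, dirDeriv D v (v j) = 0 := by
  have hker : LinearMap.ker (jacobian D e).mulVecLin ≠ ⊥ := by
    obtain ⟨v, hv0, hv⟩ := Matrix.exists_mulVec_eq_zero_iff.mpr hdet
    exact (Submodule.ne_bot_iff _).mpr ⟨v, hv, hv0⟩
  obtain ⟨v, hv, hv0, hflat⟩ := exists_mem_ne_zero_forall_derivation_eq_zero (k := k) hker
  exact ⟨v, hv0, hv, congrFun (hflat _ (jacobian_mulVec_dirDeriv_eq_zero hcomm hsymm hv))⟩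

end FlatKernel

section PowerSums

variable {κ K : Type*} [Field K] [Fintype κ] {w r : κ → K}

lemma sum_filter_eq_zero_of_forall_sum_mul_pow_eq_zero [DecidableEq K]
    (h : ∀ m : ℕ, ∑ i, w i * r i ^ (m + 1) = 0) {t : K} (ht : t ≠ 0) :
    ∑ i with r i = t, w i = 0 := by
  have hpoly : ∀ p : Polynomial K, ∑ i, w i * (r i * p.eval (r i)) = 0 := by
    intro p
    simp only [Polynomial.eval_eq_sum_range, Finset.mul_sum]
    rw [Finset.sum_comm]
    refine Finset.sum_eq_zero fun m _ => ?_
    rw [← mul_zero (p.coeff m), ← h m, Finset.mul_sum]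
    exact Finset.sum_congr rfl fun i _ => by ring
  have hbasis : ∀ i, w i * (r i * (Lagrange.basis (Finset.univ.image r) id t).eval (r i)) =
      if r i = t then t * w i else 0 := by
    intro i
    have hi : r i ∈ Finset.univ.image r := Finset.mem_image_of_mem r (Finset.mem_univ i)
    split_ifs with hit
    · subst hit
      rw [show (Lagrange.basis _ id (r i)).eval (r i) = 1 from
        Lagrange.eval_basis_self (v := id) Function.injective_id.injOn hi, mul_one, mul_comm]
    · rw [show (Lagrange.basis _ id t).eval (r i) = 0 from
        Lagrange.eval_basis_of_ne (v := id) (Ne.symm hit) hi, mul_zero, mul_zero]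
  have hsum := hpoly (Lagrange.basis (Finset.univ.image r) id t)
  simp only [hbasis, ← Finset.sum_filter, ← Finset.mul_sum] at hsum
  exact (mul_eq_zero.mp hsum).resolve_left ht

variable {k : Type*} [CommRing k] [Algebra k K] [CharZero K]

/-- Along a line, `w i = a i / (b i + c i t)` and `r i = c i / (b i + c i t)` satisfy the two
differential equations; repeated differentiation produces all the power sums. -/
lemma sum_mul_pow_eq_zero_of_derivation (E : Derivation k K K) (hw : ∀ i, E (w i) = -(w i * r i))
    (hr : ∀ i, E (r i) = -r i ^ 2) (h : E (∑ i, w i) = 0) (m : ℕ) :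
    ∑ i, w i * r i ^ (m + 1) = 0 := by
  induction m with
  | zero => simpa only [map_sum, hw, Finset.sum_neg_distrib, neg_eq_zero, zero_add, pow_one] using h
  | succ m ih =>
    have hterm : ∀ i, E (w i * r i ^ (m + 1)) = -((m : K) + 2) * (w i * r i ^ (m + 1 + 1)) := by
      intro i
      simp only [Derivation.leibniz, Derivation.leibniz_pow, hw, hr, smul_eq_mul, nsmul_eq_mul,
        Nat.add_sub_cancel, Nat.cast_succ]
      ring
    have hE := congrArg E ih
    simp only [map_sum, hterm, ← Finset.mul_sum, map_zero] at hE
    refine (mul_eq_zero.mp hE).resolve_left (neg_ne_zero.mpr ?_)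
    exact_mod_cast (m + 1).succ_ne_zero

end PowerSums

section LogGrad

variable {k K ι : Type*} [CommRing k] [Field K] [Algebra k K] {D : ι → Derivation k K K}

variable (D) in
/-- The gradient of `log u` in the frame `D`; its `jacobian` is the Hessian of `log u`. Both have
junk value `0` at `u = 0`. -/
def logGrad (u : K) : ι → K := fun j => D j u / u

lemma logGrad_apply (u : K) (j : ι) : logGrad D u j = D j u / u := rfl

lemma logGrad_mul {u v : K} (hu : u ≠ 0) (hv : v ≠ 0) :
    logGrad D (u * v) = logGrad D u + logGrad D v := by
  ext j
  simp only [logGrad_apply, Pi.add_apply, Derivation.leibniz, smul_eq_mul]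
  field_simp
  ring

lemma logGrad_zpow {u : K} (hu : u ≠ 0) (n : ℤ) : logGrad D (u ^ n) = n • logGrad D u := by
  ext j
  simp only [logGrad_apply, Pi.smul_apply, Derivation.leibniz_zpow, smul_eq_mul, zsmul_eq_mul,
    zpow_sub_one₀ hu]
  field_simp

lemma logGrad_prod_zpow {κ : Type*} (S : Finset κ) {l : κ → K} (hl : ∀ i, l i ≠ 0) (n : κ → ℤ) :
    logGrad D (∏ i ∈ S, l i ^ n i) = ∑ i ∈ S, n i • logGrad D (l i) := by
  classical
  induction S using Finset.induction_on with
  | empty => ext j; simp [logGrad_apply]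
  | insert i S hi ih =>
    rw [Finset.prod_insert hi, Finset.sum_insert hi, ← ih, ← logGrad_zpow (hl i)]
    exact logGrad_mul (zpow_ne_zero _ (hl i)) (Finset.prod_ne_zero_iff.mpr fun m _ =>
      zpow_ne_zero _ (hl m))

lemma jacobian_logGrad_prod_zpow_apply {κ : Type*} (S : Finset κ) {l : κ → K} (hl : ∀ m, l m ≠ 0)
    (n : κ → ℤ) {i j : ι} (hlin : ∀ m, D i (D j (l m)) = 0) :
    jacobian D (logGrad D (∏ m ∈ S, l m ^ n m)) i j =
      -∑ m ∈ S, D i (l m) * (l m ^ 2)⁻¹ * (n m • D j (l m)) := by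
  simp only [jacobian_apply, logGrad_prod_zpow _ hl, Finset.sum_apply, Pi.smul_apply, map_sum,
    map_zsmul, logGrad_apply, Derivation.leibniz_div, hlin, ← Finset.sum_neg_distrib]
  refine Finset.sum_congr rfl fun m _ => ?_
  simp only [smul_eq_mul, zsmul_eq_mul]
  ring

lemma jacobian_logGrad_isSymm (hcomm : ∀ i j y, D i (D j y) = D j (D i y)) (u : K) :
    (jacobian D (logGrad D u)).IsSymm := by
  refine Matrix.IsSymm.ext fun i j => ?_
  simp only [jacobian_apply, logGrad_apply, Derivation.leibniz_div, smul_eq_mul, hcomm i j]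
  ring

variable [Fintype ι]

/-- If the Hessian were degenerate, the function would be constant along lines in a direction `v`
defined over the constants of those lines. Restricted to such a line its logarithmic derivatives are
sums of simple poles, so the factors with a common nonconstant restriction cancel among
themselves. -/
lemma det_jacobian_logGrad_prod_zpow_ne_zero [CharZero K] [DecidableEq ι]
    {κ : Type*} [Fintype κ] (hcomm : ∀ i j y, D i (D j y) = D j (D i y))
    {l : κ → K} (hl : ∀ m, l m ≠ 0) (hlin : ∀ i j m, D i (D j (l m)) = 0)
    (hspan : ∀ v, (∀ m, dirDeriv D v (l m) = 0) → v = 0) {n : κ → ℤ}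
    (hindep : ∀ S : Finset κ, S.Nonempty → logGrad D (∏ m ∈ S, l m ^ n m) ≠ 0) :
    (jacobian D (logGrad D (∏ m, l m ^ n m))).det ≠ 0 := by
  classical
  intro hdet
  have hsymm := jacobian_logGrad_isSymm hcomm (∏ m, l m ^ n m)
  obtain ⟨v, hv0, hker, hflat⟩ := exists_flat_vector_of_det_jacobian_eq_zero hcomm hsymm hdet
  let E := dirDeriv D v
  have hED : ∀ j m, E (D j (l m)) = 0 := fun j m => by
    simp only [E, dirDeriv_apply, hlin, mul_zero, Finset.sum_const_zero]
  have hEE : ∀ m, E (E (l m)) = 0 := fun m => by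
    conv_lhs => enter [2]; rw [dirDeriv_apply]
    simp only [map_sum, Derivation.leibniz, hED, E, hflat, smul_zero, add_zero,
      Finset.sum_const_zero]
  let r : κ → K := fun m => E (l m) / l m
  let w : ι → κ → K := fun j m => n m • logGrad D (l m) j
  have hr : ∀ m, E (r m) = -r m ^ 2 := fun m => by
    simp only [r, Derivation.leibniz_div, hEE, smul_eq_mul]
    ring
  have hw : ∀ j m, E (w j m) = -(w j m * r m) := fun j m => by
    change E (n m • (D j (l m) / l m)) = -(n m • (D j (l m) / l m) * r m)
    rw [map_zsmul, Derivation.leibniz_div, hED]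
    simp only [r, smul_eq_mul, zsmul_eq_mul]
    ring
  have hsum : ∀ j, E (∑ m, w j m) = 0 := fun j => by
    have hprod : ∑ m, w j m = logGrad D (∏ m, l m ^ n m) j := by
      rw [logGrad_prod_zpow _ hl, Finset.sum_apply]
      rfl
    rw [hprod]
    exact (congrFun (dirDeriv_comp_eq_jacobian_mulVec hsymm v) j).trans (congrFun hker j)
  have hr0 : ∀ m, r m = 0 := by
    by_contra! ⟨m, hm⟩
    refine hindep {m' | r m' = r m} ⟨m, by simp⟩ (funext fun j => ?_)
    rw [logGrad_prod_zpow _ hl, Finset.sum_apply]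
    exact sum_filter_eq_zero_of_forall_sum_mul_pow_eq_zero
      (sum_mul_pow_eq_zero_of_derivation E (hw j) hr (hsum j)) hm
  exact hv0 (hspan v fun m => (div_eq_zero_iff.mp (hr0 m)).resolve_right (hl m))

end LogGrad

section Moebius

variable {k K ι : Type*} [CommRing k] [Field K] [Algebra k K] [Fintype ι] [DecidableEq ι]
  {D : ι → Derivation k K K}

lemma det_jacobian_smul_of_mulVec_eq_neg {e x : ι → K} {g h : K} (hg : g ≠ 0)
    (hDg : ∀ j, D j g = h * e j) (hJx : (jacobian D e).mulVec x = -e) (hex : e ⬝ᵥ x = 0) :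
    (jacobian D (g • e)).det = g ^ Fintype.card ι * (jacobian D e).det := by
  have hfactor : jacobian D (g • e) = jacobian D e *
      g • (1 + Matrix.replicateCol Unit (-(h / g) • x) * Matrix.replicateRow Unit e) := by
    rw [Matrix.mul_smul, Matrix.mul_add, Matrix.mul_one, ← Matrix.mul_assoc,
      ← Matrix.replicateCol_mulVec, Matrix.mulVec_smul, hJx]
    ext i j
    simp only [jacobian_apply, Pi.smul_apply, smul_eq_mul, Derivation.leibniz, hDg, smul_neg,
      neg_smul, neg_neg, Matrix.replicateCol_smul, Matrix.smul_mul, Matrix.smul_apply,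
      Matrix.add_apply, Matrix.mul_apply, Finset.univ_unique, PUnit.default_eq_unit,
      Matrix.replicateCol_apply, Matrix.replicateRow_apply, Finset.sum_const,
      Finset.card_singleton, one_smul]
    field_simp
  rw [hfactor, Matrix.det_mul, Matrix.det_smul, Matrix.det_one_add_replicateCol_mul_replicateRow,
    dotProduct_smul, hex, smul_zero, add_zero, mul_one, mul_comm]

/-- A fractional linear change of the function multiplies its logarithmic gradient by a function of
`u` alone, so that, by homogeneity, only a power of that function enters the determinant. -/
lemma det_jacobian_logGrad_mul_add (hcomm : ∀ i j y, D i (D j y) = D j (D i y))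
    {x : ι → K} (hx : ∀ i j, D i (x j) = (Pi.single j 1 : ι → K) i)
    {u : K} (hu : u ≠ 0) (hxu : dirDeriv D x u = 0) {p q : K} (hp : p ≠ 0)
    (hDp : ∀ j, D j p = 0) (hDq : ∀ j, D j q = 0) (hw : p * u + q ≠ 0) :
    (jacobian D (logGrad D (p * u + q))).det =
      (p * u / (p * u + q)) ^ Fintype.card ι * (jacobian D (logGrad D u)).det := by
  have hsmul : logGrad D (p * u + q) = (p * u / (p * u + q)) • logGrad D u := by
    ext j
    simp only [logGrad_apply, Pi.smul_apply, map_add, Derivation.leibniz, hDp, hDq, smul_eq_mul]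
    field_simp
    ring
  have hdir : (logGrad D u) ⬝ᵥ x = 0 := by
    rw [← zero_div u, ← hxu, dirDeriv_apply, Finset.sum_div, dotProduct]
    exact Finset.sum_congr rfl fun j _ => by rw [logGrad_apply]; ring
  rw [hsmul]
  refine det_jacobian_smul_of_mulVec_eq_neg (h := p * q * u / (p * u + q) ^ 2)
    (div_ne_zero (mul_ne_zero hp hu) hw) (fun j => ?_) ?_ hdir
  · simp only [logGrad_apply, Derivation.leibniz_div, map_add, Derivation.leibniz, hDp, hDq,
      smul_eq_mul]
    field_simp
    ring
  · rw [← dirDeriv_comp_eq_jacobian_mulVec (jacobian_logGrad_isSymm hcomm u)]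
    ext j
    simp only [logGrad_apply, Derivation.leibniz_div, hxu, dirDeriv_comm_of_coordinates hcomm hx,
      map_zero, smul_eq_mul, Pi.neg_apply]
    field_simp
    ring

end Moebius

section Weight

variable {k K : Type*} [CommRing k]

/-- `y` is homogeneous of degree `m`, for `E` in the role of the Euler derivation. -/
def HasWeight [CommRing K] [Algebra k K] (E : Derivation k K K) (m : ℤ) (y : K) : Prop :=
  E y = m • y

namespace HasWeight

section CommRing

variable [CommRing K] [Algebra k K] {E : Derivation k K K} {m n : ℤ} {y z : K}

lemma mul (hy : HasWeight E m y) (hz : HasWeight E n z) : HasWeight E (m + n) (y * z) := by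
  rw [HasWeight] at hy hz
  simp only [HasWeight, Derivation.leibniz, hy, hz, smul_eq_mul, zsmul_eq_mul, Int.cast_add]
  ring

lemma prod {κ : Type*} (S : Finset κ) {f : κ → K} (hf : ∀ i, HasWeight E m (f i)) :
    HasWeight E (S.card * m) (∏ i ∈ S, f i) := by
  classical
  induction S using Finset.induction_on with
  | empty => simp [HasWeight]
  | insert i S hi ih =>
    rw [Finset.prod_insert hi, Finset.card_insert_of_notMem hi]
    convert! (hf i).mul ih using 1
    push_cast
    ring

lemma pow (hy : HasWeight E m y) (n : ℕ) : HasWeight E (n * m) (y ^ n) := by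
  simpa using prod (Finset.range n) fun _ => hy

lemma det {ι : Type*} [Fintype ι] [DecidableEq ι] {M : Matrix ι ι K}
    (hM : ∀ i j, HasWeight E m (M i j)) : HasWeight E (Fintype.card ι * m) M.det := by
  have hterm : ∀ σ : Equiv.Perm ι, E (∏ i, M (σ i) i) = (Fintype.card ι * m : ℤ) •
      ∏ i, M (σ i) i := fun σ => prod Finset.univ fun i => hM (σ i) i
  rw [HasWeight, Matrix.det_apply, map_sum, Finset.smul_sum]
  refine Finset.sum_congr rfl fun σ _ => ?_
  rw [Units.smul_def, map_zsmul, hterm, smul_comm]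

end CommRing

variable [Field K] [Algebra k K] {E : Derivation k K K} {m n : ℤ} {y z : K}

lemma div (hy : HasWeight E m y) (hz : HasWeight E n z) : HasWeight E (m - n) (y / z) := by
  rcases eq_or_ne z 0 with rfl | hz0
  · simp [HasWeight]
  · rw [HasWeight] at hy hz
    simp only [HasWeight, Derivation.leibniz_div, hy, hz, smul_eq_mul, zsmul_eq_mul, Int.cast_sub]
    field_simp

variable {ι : Type*} [Fintype ι] [DecidableEq ι] {D : ι → Derivation k K K}

lemma det_jacobian_logGrad (hcomm : ∀ i j y, D i (D j y) = D j (D i y)) {x : ι → K}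
    (hx : ∀ i j, D i (x j) = (Pi.single j 1 : ι → K) i) (hy : HasWeight (dirDeriv D x) m y) :
    HasWeight (dirDeriv D x) (Fintype.card ι * (-2)) (jacobian D (logGrad D y)).det := by
  have hD : ∀ {m : ℤ} {z : K}, HasWeight (dirDeriv D x) m z →
      ∀ i, HasWeight (dirDeriv D x) (m - 1) (D i z) := fun {m z} hz i => by
    rw [HasWeight] at hz ⊢
    rw [dirDeriv_comm_of_coordinates hcomm hx, hz, map_zsmul, sub_smul, one_smul]
  refine det fun i j => ?_
  convert! hD ((hD hy j).div hy) i using 1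
  ring

end HasWeight

end Weight

section BorderedDeterminant

variable {K ι κ : Type*} [Field K] [Fintype ι] [DecidableEq ι] [Fintype κ] [DecidableEq κ]

lemma det_fromBlocks_diagonal_zero₂₂ {ν : κ → K} (hν : ∀ m, ν m ≠ 0) (B : Matrix κ ι K)
    (C : Matrix ι κ K) : (Matrix.fromBlocks (Matrix.diagonal ν) B C 0).det =
      (∏ m, ν m) * (-(C * Matrix.diagonal ν⁻¹ * B)).det := by
  have hdiag : Matrix.diagonal ν * Matrix.diagonal ν⁻¹ = 1 := by
    rw [Matrix.diagonal_mul_diagonal, ← Matrix.diagonal_one]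
    congr 1
    exact funext fun m => mul_inv_cancel₀ (hν m)
  have hfactor : Matrix.fromBlocks (Matrix.diagonal ν) B C 0 =
      Matrix.fromBlocks (Matrix.diagonal ν) 0 0 1 *
        Matrix.fromBlocks 1 (Matrix.diagonal ν⁻¹ * B) C 0 := by
    simp [Matrix.fromBlocks_multiply, ← Matrix.mul_assoc, hdiag]
  rw [hfactor, Matrix.det_mul, Matrix.det_fromBlocks_zero₂₁, Matrix.det_one, mul_one,
    Matrix.det_diagonal, Matrix.det_fromBlocks_one₁₁, zero_sub, Matrix.mul_assoc]

end BorderedDeterminant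

section FractionDerivation

variable {k R K : Type*} [CommRing k] [CommRing R] [Field K] [Algebra R K] [Algebra k K]

lemma derivation_ext_of_isFractionRing [IsFractionRing R K] {d₁ d₂ : Derivation k K K}
    (h : ∀ r : R, d₁ (algebraMap R K r) = d₂ (algebraMap R K r)) : d₁ = d₂ := by
  ext y
  obtain ⟨a, b, -, rfl⟩ := IsFractionRing.div_surjective (A := R) y
  rw [Derivation.leibniz_div, Derivation.leibniz_div, h, h]

variable [Algebra k R] [IsScalarTower k R K] [IsFractionRing R K]

open TensorProduct KaehlerDifferential

variable (K) in
/-- The extension of a derivation of `R` to the fraction field of `R`, induced by the isomorphism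
`K ⊗[R] Ω[R⁄k] ≃ Ω[K⁄k]`. -/
def fractionDerivation (d : Derivation k R R) : Derivation k K K :=
  haveI := Algebra.FormallyEtale.of_isLocalization (Rₘ := K) (nonZeroDivisors R)
  ((((Algebra.linearMap R K).compDer d).liftKaehlerDifferential.liftBaseChange K).comp
    (tensorKaehlerEquivOfFormallyEtale k R K).symm.toLinearMap).compDer (D k K)

lemma fractionDerivation_algebraMap (d : Derivation k R R) (r : R) :
    fractionDerivation K d (algebraMap R K r) = algebraMap R K (d r) := by
  have := Algebra.FormallyEtale.of_isLocalization (Rₘ := K) (nonZeroDivisors R)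
  change LinearMap.liftBaseChange K _
    ((tensorKaehlerEquivOfFormallyEtale k R K).symm (D k K (algebraMap R K r))) = _
  rw [tensorKaehlerEquivOfFormallyEtale_symm_D_algebraMap]
  simp

end FractionDerivation

section PartialDerivatives

variable {k ι : Type*}

lemma pderiv_pderiv_comm [CommSemiring k] (i j : ι) (P : MvPolynomial ι k) :
    pderiv i (pderiv j P) = pderiv j (pderiv i P) := by
  classical
  induction P using MvPolynomial.induction_on with
  | C a => simp only [pderiv_C, map_zero]
  | add p q hp hq => simp only [map_add, hp, hq]
  | mul_X p m h =>
    have hconst : ∀ i j : ι, pderiv i (pderiv j (X m : MvPolynomial ι k)) = 0 := fun i j => by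
      rw [pderiv_X, Pi.single_apply]
      split_ifs <;> simp
    simp only [Derivation.leibniz, map_add, h, hconst, smul_eq_mul]
    ring

lemma pderiv_pderiv_of_isHomogeneous_one [CommSemiring k] {l : MvPolynomial ι k}
    (hl : l.IsHomogeneous 1) (i j : ι) : pderiv i (pderiv j l) = 0 := by
  rw [(totalDegree_eq_zero_iff_eq_C (p := pderiv j l)).mp
    (Nat.le_zero.mp (hl.pderiv (i := j)).totalDegree_le), pderiv_C]

lemma coeff_X_mul_pderiv [CommSemiring k] (i : ι) (P : MvPolynomial ι k) (s : ι →₀ ℕ) :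
    coeff s (X i * pderiv i P) = s i * coeff s P := by
  classical
  induction P using MvPolynomial.induction_on' with
  | monomial t a =>
    rw [X_mul_pderiv_monomial, coeff_smul, coeff_monomial, nsmul_eq_mul]
    split_ifs with hts
    · rw [hts]
    · rw [mul_zero, mul_zero]
  | add p q hp hq => simp only [map_add, mul_add, coeff_add, hp, hq]

variable [CommRing k] [IsDomain k] [CharZero k] {P Q : MvPolynomial ι k} {a b : ℕ}

lemma eq_zero_of_sum_X_mul_pderiv_eq_neg_smul [Fintype ι] {m : ℤ} (hm : m < 0)
    (hP : ∑ i, X i * pderiv i P = m • P) : P = 0 := by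
  ext s
  have hcoeff : (∑ i, (s i : k)) * coeff s P = m • coeff s P := by
    simpa only [coeff_sum, coeff_smul, coeff_X_mul_pderiv, ← Finset.sum_mul] using
      congrArg (coeff s) hP
  rw [zsmul_eq_mul, ← sub_eq_zero, ← sub_mul] at hcoeff
  have hlt : m < ∑ i, (s i : ℤ) := hm.trans_le (Finset.sum_nonneg fun i _ => Int.natCast_nonneg _)
  refine (mul_eq_zero.mp hcoeff).resolve_left ?_
  exact_mod_cast sub_ne_zero.mpr hlt.ne'

lemma degree_eq_zero_of_forall_dvd_pderiv [Finite ι] (hP : P.IsHomogeneous a) (hP0 : P ≠ 0)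
    (hdvd : ∀ i, P ∣ pderiv i P) : a = 0 := by
  cases nonempty_fintype ι
  by_contra ha
  have hzero : ∀ i, pderiv i P = 0 := fun i => by
    by_contra hi
    have hle := totalDegree_le_of_dvd_of_isDomain (hdvd i) hi
    rw [hP.totalDegree hP0, (hP.pderiv (i := i)).totalDegree hi] at hle
    omega
  have hEuler := hP.sum_X_mul_pderiv
  simp only [hzero, mul_zero, Finset.sum_const_zero] at hEuler
  exact (smul_ne_zero ha hP0) hEuler.symm

lemma degree_eq_zero_of_mul_pderiv_eq [Finite ι] [DecompositionMonoid (MvPolynomial ι k)]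
    (hP : P.IsHomogeneous a) (hP0 : P ≠ 0) (hPQ : IsRelPrime P Q)
    (h : ∀ i, Q * pderiv i P = P * pderiv i Q) : a = 0 :=
  degree_eq_zero_of_forall_dvd_pderiv hP hP0 fun i =>
    hPQ.dvd_of_dvd_mul_left ⟨pderiv i Q, h i⟩

end PartialDerivatives

section FractionPderiv

variable {k K ι : Type*} [CommRing k] [Field K] [Algebra (MvPolynomial ι k) K] [Algebra k K]
  [IsScalarTower k (MvPolynomial ι k) K] [IsFractionRing (MvPolynomial ι k) K]

variable (k K) in
/-- The partial derivative `∂/∂X i` on the field `K` of rational functions. -/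
def fractionPderiv (i : ι) : Derivation k K K := fractionDerivation K (pderiv (R := k) i)

local notation "∂" => fractionPderiv (ι := ι) k K
local notation "φ" => algebraMap (MvPolynomial ι k) K

lemma fractionPderiv_algebraMap (i : ι) (P : MvPolynomial ι k) : ∂ i (φ P) = φ (pderiv i P) :=
  fractionDerivation_algebraMap _ P

lemma fractionPderiv_comm (i j : ι) (y : K) : ∂ i (∂ j y) = ∂ j (∂ i y) := by
  have hbracket : ⁅∂ i, ∂ j⁆ = 0 :=
    derivation_ext_of_isFractionRing (R := MvPolynomial ι k) fun P => by
      rw [Derivation.commutator_apply, Derivation.zero_apply]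
      simp only [fractionPderiv_algebraMap, pderiv_pderiv_comm i j, sub_self]
  rw [← sub_eq_zero, ← Derivation.commutator_apply, hbracket, Derivation.zero_apply]

lemma fractionPderiv_algebraMap_X [DecidableEq ι] (i j : ι) :
    ∂ i (φ (X j)) = (Pi.single j 1 : ι → K) i := by
  rw [fractionPderiv_algebraMap, pderiv_X, Pi.single_comm, ← map_one φ]
  exact (Pi.apply_single (fun _ => φ) (fun _ => map_zero φ) j 1 i)

/-- The Hessian is a Schur complement in a bordered matrix of polynomials, whose remaining block is
diagonal with the squares of the forms as entries. -/
lemma exists_algebraMap_eq_prod_sq_mul_det_jacobian_logGrad [DecidableEq ι] [Fintype ι]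
    {κ : Type*} [Fintype κ] {l : κ → MvPolynomial ι k} (hl : ∀ m, (l m).IsHomogeneous 1)
    (hl0 : ∀ m, l m ≠ 0) (n : κ → ℤ) :
    ∃ A, φ A = (∏ m, φ (l m)) ^ 2 * (jacobian ∂ (logGrad ∂ (∏ m, φ (l m) ^ n m))).det := by
  classical
  have hφl : ∀ m, φ (l m) ≠ 0 := fun m =>
    (map_ne_zero_iff φ (IsFractionRing.injective _ K)).mpr (hl0 m)
  let B : Matrix κ ι (MvPolynomial ι k) := Matrix.of fun m j => n m • pderiv j (l m)
  let C : Matrix ι κ (MvPolynomial ι k) := Matrix.of fun i m => pderiv i (l m)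
  have hschur : jacobian ∂ (logGrad ∂ (∏ m, φ (l m) ^ n m)) =
      -(C.map φ * Matrix.diagonal (fun m => φ (l m) ^ 2)⁻¹ * B.map φ) := by
    ext i j
    have hlin : ∀ m, ∂ i (∂ j (φ (l m))) = 0 := fun m => by
      rw [fractionPderiv_algebraMap, fractionPderiv_algebraMap,
        pderiv_pderiv_of_isHomogeneous_one (hl m), map_zero]
    rw [jacobian_logGrad_prod_zpow_apply _ hφl n hlin, Matrix.neg_apply, Matrix.mul_apply]
    simp only [Matrix.mul_diagonal, Matrix.map_apply, B, C, Matrix.of_apply, Pi.inv_apply,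
      fractionPderiv_algebraMap, map_zsmul]
  refine ⟨(Matrix.fromBlocks (Matrix.diagonal fun m => l m ^ 2) B C 0).det, ?_⟩
  rw [hschur, ← Finset.prod_pow, ← det_fromBlocks_diagonal_zero₂₂ fun m => pow_ne_zero 2 (hφl m),
    RingHom.map_det, RingHom.mapMatrix_apply, Matrix.fromBlocks_map,
    Matrix.diagonal_map (map_zero φ), Matrix.map_zero φ (map_zero φ)]
  simp only [map_pow]

lemma degree_eq_zero_of_logGrad_div_eq_zero [Finite ι] [IsDomain k] [CharZero k]
    [DecompositionMonoid (MvPolynomial ι k)] {P Q : MvPolynomial ι k} {a b : ℕ}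
    (hP : P.IsHomogeneous a) (hQ : Q.IsHomogeneous b)
    (hP0 : P ≠ 0) (hQ0 : Q ≠ 0) (hPQ : IsRelPrime P Q) (h : logGrad ∂ (φ P / φ Q) = 0) :
    a = 0 ∧ b = 0 := by
  have hinj := IsFractionRing.injective (MvPolynomial ι k) K
  have hφP : φ P ≠ 0 := (map_ne_zero_iff φ hinj).mpr hP0
  have hφQ : φ Q ≠ 0 := (map_ne_zero_iff φ hinj).mpr hQ0
  have hmul : ∀ i, Q * pderiv i P = P * pderiv i Q := fun i => hinj <| by
    have hi := (div_eq_zero_iff.mp (congrFun h i)).resolve_right (div_ne_zero hφP hφQ)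
    rw [Derivation.leibniz_div, smul_eq_mul, smul_eq_mul, smul_eq_mul, fractionPderiv_algebraMap,
      fractionPderiv_algebraMap] at hi
    rw [map_mul, map_mul]
    exact sub_eq_zero.mp ((mul_eq_zero.mp hi).resolve_left (pow_ne_zero 2 (inv_ne_zero hφQ)))
  exact ⟨degree_eq_zero_of_mul_pderiv_eq hP hP0 hPQ hmul,
    degree_eq_zero_of_mul_pderiv_eq hQ hQ0 hPQ.symm fun i => (hmul i).symm⟩

variable [Fintype ι]

lemma hasWeight_algebraMap {P : MvPolynomial ι k} {d : ℕ} (hP : P.IsHomogeneous d) :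
    HasWeight (dirDeriv ∂ fun i => φ (X i)) d (φ P) := by
  simp only [HasWeight, dirDeriv_apply, fractionPderiv_algebraMap, ← map_mul, ← map_sum,
    hP.sum_X_mul_pderiv, map_nsmul, natCast_zsmul]

lemma eq_zero_of_hasWeight_neg [IsDomain k] [CharZero k] {P : MvPolynomial ι k} {m : ℤ} (hm : m < 0)
    (hP : HasWeight (dirDeriv ∂ fun i => φ (X i)) m (φ P)) : P = 0 :=
  eq_zero_of_sum_X_mul_pderiv_eq_neg_smul hm <| IsFractionRing.injective (MvPolynomial ι k) K <| by
    simpa only [HasWeight, dirDeriv_apply, fractionPderiv_algebraMap, ← map_mul, ← map_sum,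
      ← map_zsmul] using hP

end FractionPderiv

section LinearForms

lemma prod_sumElim_zpow {K κ₁ κ₂ : Type*} [Field K] (S : Finset (κ₁ ⊕ κ₂)) (a : κ₁ → K)
    (b : κ₂ → K) : ∏ m ∈ S, Sum.elim a b m ^ (Sum.elim 1 (-1) m : ℤ) =
      (∏ i ∈ S.toLeft, a i) / ∏ j ∈ S.toRight, b j := by
  simp only [Finset.prod_sum_eq_prod_toLeft_mul_prod_toRight, Sum.elim_inl, Sum.elim_inr,
    Pi.one_apply, Pi.neg_apply, zpow_one, zpow_neg, Finset.prod_inv_distrib, div_eq_mul_inv]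

lemma isHomogeneous_prod_of_forall_one {k σ κ : Type*} [CommSemiring k] (S : Finset κ)
    {f : κ → MvPolynomial σ k} (hf : ∀ i, (f i).IsHomogeneous 1) :
    (∏ i ∈ S, f i).IsHomogeneous S.card := by
  simpa only [Finset.sum_const, smul_eq_mul, mul_one] using
    IsHomogeneous.prod S f (fun _ => 1) fun i _ => hf i

variable {k K ι κ κ' : Type*} [Field k] [Field K] [Algebra (MvPolynomial ι k) K]
  [Algebra k K] [IsScalarTower k (MvPolynomial ι k) K] [IsFractionRing (MvPolynomial ι k) K]
  [Fintype ι] [DecidableEq ι] [Fintype κ] [Fintype κ']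
  {f : κ → MvPolynomial ι k} {g : κ' → MvPolynomial ι k}

local notation "∂" => fractionPderiv (ι := ι) k K
local notation "φ" => algebraMap (MvPolynomial ι k) K

lemma exists_algebraMap_eq_sq_mul_det_jacobian_logGrad_prod_div_prod
    (hf : ∀ i, (f i).IsHomogeneous 1) (hg : ∀ i, (g i).IsHomogeneous 1)
    (hf0 : ∀ i, f i ≠ 0) (hg0 : ∀ i, g i ≠ 0) :
    ∃ A, φ A = (φ (∏ i, f i) * φ (∏ i, g i)) ^ 2 *
      (jacobian ∂ (logGrad ∂ (φ (∏ i, f i) / φ (∏ i, g i)))).det := by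
  obtain ⟨A, hA⟩ := exists_algebraMap_eq_prod_sq_mul_det_jacobian_logGrad (K := K)
    (l := Sum.elim f g) (by rintro (i | i) <;> simp [hf, hg])
    (by rintro (i | i) <;> simp [hf0, hg0]) (Sum.elim 1 (-1))
  refine ⟨A, hA.trans ?_⟩
  have hl : ∀ m, φ (Sum.elim f g m) = Sum.elim (fun i => φ (f i)) (fun i => φ (g i)) m := by
    rintro (i | i) <;> rfl
  simp only [hl, prod_sumElim_zpow, Fintype.prod_sum_type, Sum.elim_inl, Sum.elim_inr,
    Finset.toLeft_univ, Finset.toRight_univ, map_prod]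

lemma det_jacobian_logGrad_prod_div_prod_ne_zero [CharZero k]
    (hf : ∀ i, (f i).IsHomogeneous 1) (hg : ∀ i, (g i).IsHomogeneous 1)
    (hf0 : ∀ i, f i ≠ 0) (hg0 : ∀ i, g i ≠ 0)
    (hfg : IsRelPrime (∏ i, f i) (∏ i, g i))
    (hspan : ∀ j, X j ∈ Submodule.span k (Set.range f ∪ Set.range g)) :
    (jacobian ∂ (logGrad ∂ (φ (∏ i, f i) / φ (∏ i, g i)))).det ≠ 0 := by
  have : CharZero K := charZero_of_injective_algebraMap (algebraMap k K).injective
  let l : κ ⊕ κ' → K := Sum.elim (fun i => φ (f i)) fun i => φ (g i)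
  have hinj := IsFractionRing.injective (MvPolynomial ι k) K
  have hl0 : ∀ m, l m ≠ 0 := by
    rintro (i | i)
    exacts [(map_ne_zero_iff φ hinj).mpr (hf0 i), (map_ne_zero_iff φ hinj).mpr (hg0 i)]
  have hlin : ∀ i j m, ∂ i (∂ j (l m)) = 0 := by
    rintro i j (m | m)
    all_goals simp [l, fractionPderiv_algebraMap, pderiv_pderiv_of_isHomogeneous_one, hf, hg]
  have hquot : ∀ S : Finset (κ ⊕ κ'), ∏ m ∈ S, l m ^ (Sum.elim 1 (-1) m : ℤ) =
      φ (∏ i ∈ S.toLeft, f i) / φ (∏ i ∈ S.toRight, g i) := fun S => by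
    rw [prod_sumElim_zpow, map_prod, map_prod]
  have hrat := hquot Finset.univ
  rw [Finset.toLeft_univ, Finset.toRight_univ] at hrat
  rw [← hrat]
  refine det_jacobian_logGrad_prod_zpow_ne_zero fractionPderiv_comm hl0 hlin
    (fun v hv => funext fun j => ?_) fun S hS hzero => ?_
  · have hle : Submodule.span k (Set.range f ∪ Set.range g) ≤
        LinearMap.ker
          ((dirDeriv ∂ v).toLinearMap ∘ₗ (IsScalarTower.toAlgHom k _ K).toLinearMap) := by
      rw [Submodule.span_le]
      rintro _ (⟨i, rfl⟩ | ⟨i, rfl⟩)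
      exacts [hv (Sum.inl i), hv (Sum.inr i)]
    have hj : dirDeriv ∂ v (φ (X j)) = 0 := hle (hspan j)
    simpa [dirDeriv_apply, fractionPderiv_algebraMap_X, Pi.single_apply] using hj
  · rw [hquot] at hzero
    have hcard := degree_eq_zero_of_logGrad_div_eq_zero (isHomogeneous_prod_of_forall_one _ hf)
      (isHomogeneous_prod_of_forall_one _ hg) (Finset.prod_ne_zero_iff.mpr fun i _ => hf0 i)
      (Finset.prod_ne_zero_iff.mpr fun i _ => hg0 i)
      ((hfg.of_dvd_left (Finset.prod_dvd_prod_of_subset _ _ f (Finset.subset_univ _))).of_dvd_right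
        (Finset.prod_dvd_prod_of_subset _ _ g (Finset.subset_univ _))) hzero
    have := S.card_toLeft_add_card_toRight
    have := hS.card_pos
    omega

end LinearForms

section Pencil

variable {k K ι : Type*} [Field k] [Field K] [Algebra (MvPolynomial ι k) K] [Algebra k K]
  [IsScalarTower k (MvPolynomial ι k) K] [IsFractionRing (MvPolynomial ι k) K] [Fintype ι]
  [DecidableEq ι] {F G H A B : MvPolynomial ι k} {p q : k}

local notation "∂" => fractionPderiv (ι := ι) k K
local notation "φ" => algebraMap (MvPolynomial ι k) K

lemma pow_mul_eq_pow_mul_of_pencil {a : ℕ} (hF : F.IsHomogeneous a) (hG : G.IsHomogeneous a)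
    (hF0 : F ≠ 0) (hG0 : G ≠ 0) (hH0 : H ≠ 0) (hp : p ≠ 0) (hH : C p * F + C q * G = H)
    (hA : φ A = (φ F * φ G) ^ 2 * (jacobian ∂ (logGrad ∂ (φ F / φ G))).det)
    (hB : φ B = (φ H * φ G) ^ 2 * (jacobian ∂ (logGrad ∂ (φ H / φ G))).det) :
    H ^ Fintype.card ι * (F ^ 2 * B) = (C p * F) ^ Fintype.card ι * (H ^ 2 * A) := by
  have hinj := IsFractionRing.injective (MvPolynomial ι k) K
  have hφ : ∀ {P}, P ≠ 0 → φ P ≠ 0 := fun hP => (map_ne_zero_iff φ hinj).mpr hP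
  have hquot : φ H / φ G = φ (C p) * (φ F / φ G) + φ (C q) := by
    rw [← hH, map_add, map_mul, map_mul]
    field_simp [hφ hG0]
  have hratio : φ (C p) * (φ F / φ G) / (φ H / φ G) = φ (C p * F) / φ H := by
    rw [map_mul]
    field_simp [hφ hG0]
  have hconst : ∀ (c : k) j, ∂ j (φ (C c)) = 0 := fun c j => by
    rw [fractionPderiv_algebraMap, pderiv_C, map_zero]
  have hweight : dirDeriv ∂ (fun i => φ (X i)) (φ F / φ G) = 0 := by
    simpa [HasWeight] using (hasWeight_algebraMap hF).div (hasWeight_algebraMap hG)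
  have hdet := det_jacobian_logGrad_mul_add fractionPderiv_comm fractionPderiv_algebraMap_X
    (div_ne_zero (hφ hF0) (hφ hG0)) hweight (hφ (C_ne_zero.mpr hp)) (hconst p) (hconst q)
    (hquot ▸ div_ne_zero (hφ hH0) (hφ hG0))
  rw [← hquot, hratio, div_pow, div_mul_eq_mul_div, eq_div_iff (pow_ne_zero _ (hφ hH0))] at hdet
  apply hinj
  rw [map_mul, map_mul, hB, map_mul, map_mul, hA]
  simp only [map_pow]
  linear_combination (φ F) ^ 2 * (φ H * φ G) ^ 2 * hdet

lemma pow_dvd_of_pencil {a m : ℕ} (hF : F.IsHomogeneous a) (hG : G.IsHomogeneous a)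
    (hF0 : F ≠ 0) (hG0 : G ≠ 0) (hH0 : H ≠ 0) (hFG : IsRelPrime F G) (hp : p ≠ 0) (hq : q ≠ 0)
    (hH : C p * F + C q * G = H) (hm : Fintype.card ι = m + 2)
    (hA : φ A = (φ F * φ G) ^ 2 * (jacobian ∂ (logGrad ∂ (φ F / φ G))).det)
    (hB : φ B = (φ H * φ G) ^ 2 * (jacobian ∂ (logGrad ∂ (φ H / φ G))).det) :
    H ^ m ∣ A := by
  have hunit : ∀ {c : k}, c ≠ 0 → IsUnit (C c : MvPolynomial ι k) := fun hc =>
    (IsUnit.mk0 _ hc).map C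
  have hHF : IsRelPrime H F := fun r hrH hrF =>
    hFG hrF ((hunit hq).dvd_mul_left.mp
      ((dvd_add_right (hrF.mul_left (C p))).mp (hH ▸ hrH)))
  have hpow := pow_mul_eq_pow_mul_of_pencil hF hG hF0 hG0 hH0 hp hH hA hB
  rw [hm] at hpow
  have hcancel : H ^ m * B = F ^ m * (C p ^ (m + 2) * A) :=
    mul_left_cancel₀ (mul_ne_zero (pow_ne_zero 2 hH0) (pow_ne_zero 2 hF0)) <| by
      linear_combination hpow
  exact ((hunit hp).pow _).dvd_mul_left.mp
    ((hHF.pow (m := m) (n := m)).dvd_of_dvd_mul_left ⟨B, hcancel.symm⟩)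

lemma eq_zero_of_pow_dvd_sq_mul_det_jacobian_logGrad [CharZero k] {d m : ℕ}
    (hF : F.IsHomogeneous d) (hG : G.IsHomogeneous d) (hH : H.IsHomogeneous d) (hH0 : H ≠ 0)
    (hlt : 4 * d < m * d + 2 * Fintype.card ι)
    (hA : φ A = (φ F * φ G) ^ 2 * (jacobian ∂ (logGrad ∂ (φ F / φ G))).det)
    (hdvd : H ^ m ∣ A) : A = 0 := by
  obtain ⟨Q, rfl⟩ := hdvd
  have hFφ := hasWeight_algebraMap (K := K) hF
  have hGφ := hasWeight_algebraMap (K := K) hG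
  have hHφ := hasWeight_algebraMap (K := K) hH
  have hdet := (hFφ.div hGφ).det_jacobian_logGrad fractionPderiv_comm fractionPderiv_algebraMap_X
  have hHm0 : φ (H ^ m) ≠ 0 :=
    (map_ne_zero_iff φ (IsFractionRing.injective _ _)).mpr (pow_ne_zero m hH0)
  have hQ := (((hFφ.mul hGφ).pow 2).mul hdet).div (hHφ.pow m)
  rw [← hA, ← map_pow, map_mul, mul_div_cancel_left₀ _ hHm0] at hQ
  rw [eq_zero_of_hasWeight_neg (by push_cast; linarith) hQ, mul_zero]

end Pencil

lemma card_le_five_of_prod_add_prod_eq_prod {k ι κ : Type*} [Field k] [CharZero k] [Fintype ι]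
    [Fintype κ] {f g h : κ → MvPolynomial ι k} {p q : k}
    (hf : ∀ i, (f i).IsHomogeneous 1) (hg : ∀ i, (g i).IsHomogeneous 1)
    (hh : ∀ i, (h i).IsHomogeneous 1) (hf0 : ∀ i, f i ≠ 0) (hg0 : ∀ i, g i ≠ 0)
    (hh0 : ∀ i, h i ≠ 0) (hfg : IsRelPrime (∏ i, f i) (∏ i, g i)) (hp : p ≠ 0) (hq : q ≠ 0)
    (hpencil : C p * ∏ i, f i + C q * ∏ i, g i = ∏ i, h i)
    (hspan : ∀ j, X j ∈ Submodule.span k (Set.range f ∪ Set.range g)) :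
    Fintype.card ι ≤ 5 := by
  classical
  by_contra! hcard
  obtain ⟨m, hm⟩ := Nat.exists_eq_add_of_le hcard
  have hdeg : ∀ {l : κ → MvPolynomial ι k}, (∀ i, (l i).IsHomogeneous 1) →
      (∏ i, l i).IsHomogeneous (Fintype.card κ) := isHomogeneous_prod_of_forall_one _
  have hne : ∀ {l : κ → MvPolynomial ι k}, (∀ i, l i ≠ 0) → ∏ i, l i ≠ 0 :=
    fun hl => Finset.prod_ne_zero_iff.mpr fun i _ => hl i
  obtain ⟨A, hA⟩ := exists_algebraMap_eq_sq_mul_det_jacobian_logGrad_prod_div_prod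
    (K := FractionRing (MvPolynomial ι k)) hf hg hf0 hg0
  obtain ⟨B, hB⟩ := exists_algebraMap_eq_sq_mul_det_jacobian_logGrad_prod_div_prod
    (K := FractionRing (MvPolynomial ι k)) hh hg hh0 hg0
  have hdvd : (∏ i, h i) ^ (m + 4) ∣ A :=
    pow_dvd_of_pencil (hdeg hf) (hdeg hg) (hne hf0) (hne hg0) (hne hh0) hfg hp hq hpencil
      (by omega) hA hB
  have hA0 : A = 0 :=
    eq_zero_of_pow_dvd_sq_mul_det_jacobian_logGrad (hdeg hf) (hdeg hg) (hdeg hh) (hne hh0)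
      (by rw [add_mul]; omega) hA hdvd
  rw [hA0, map_zero] at hA
  have hinj := IsFractionRing.injective (MvPolynomial ι k) (FractionRing (MvPolynomial ι k))
  exact mul_ne_zero
    (pow_ne_zero 2 (mul_ne_zero ((map_ne_zero_iff _ hinj).mpr (hne hf0))
      ((map_ne_zero_iff _ hinj).mpr (hne hg0))))
    (det_jacobian_logGrad_prod_div_prod_ne_zero hf hg hf0 hg0 hfg hspan) hA.symm

section LinearFactors

variable {k σ κ : Type*} [Field k]

/-- Products of linear forms over an arbitrary field and in arbitrarily many variables; over `ℂ`
and `Fin (n + 1)` this is `CompletelyReducible n`. -/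
def IsProdOfLinearForms (P : MvPolynomial σ k) : Prop :=
  ∃ s : Multiset (MvPolynomial σ k), (∀ α ∈ s, α ≠ 0 ∧ α.IsHomogeneous 1) ∧ P = s.prod

lemma IsProdOfLinearForms.exists_eq_prod {P : MvPolynomial σ k} {d : ℕ}
    (h : IsProdOfLinearForms P) (hP : P.IsHomogeneous d) :
    ∃ f : Fin d → MvPolynomial σ k,
      (∀ i, f i ≠ 0) ∧ (∀ i, (f i).IsHomogeneous 1) ∧ P = ∏ i, f i := by
  obtain ⟨s, hs, rfl⟩ := h
  let f : Fin s.toList.length → MvPolynomial σ k := fun i => s.toList[i]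
  have hprod : s.prod = ∏ i, f i :=
    s.prod_toList.symm.trans (Fin.prod_univ_getElem _).symm
  have hf : ∀ i, f i ≠ 0 ∧ (f i).IsHomogeneous 1 := fun i =>
    hs _ (Multiset.mem_toList.mp (List.getElem_mem _))
  obtain rfl : s.toList.length = d := by
    refine IsHomogeneous.inj_right ?_ hP (hprod ▸ Finset.prod_ne_zero_iff.mpr fun i _ => (hf i).1)
    simpa [hprod] using isHomogeneous_prod_of_forall_one Finset.univ fun i => (hf i).2
  exact ⟨f, fun i => (hf i).1, fun i => (hf i).2, hprod⟩

lemma irreducible_of_isHomogeneous_one {α : MvPolynomial σ k} (hα0 : α ≠ 0)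
    (hα : α.IsHomogeneous 1) : Irreducible α := by
  refine irreducible_of_totalDegree_eq_one (hα.totalDegree hα0) fun x hx => ?_
  obtain ⟨s, hs⟩ := ne_zero_iff.mp hα0
  exact (ne_zero_of_dvd_ne_zero hs (hx s)).isUnit

lemma mem_span_range_of_dvd_prod [Fintype κ] {α : MvPolynomial σ k} (hα0 : α ≠ 0)
    (hα : α.IsHomogeneous 1) {f : κ → MvPolynomial σ k} (hf0 : ∀ i, f i ≠ 0)
    (hf : ∀ i, (f i).IsHomogeneous 1) (hdvd : α ∣ ∏ i, f i) :
    α ∈ Submodule.span k (Set.range f) := by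
  have hirr := irreducible_of_isHomogeneous_one hα0 hα
  obtain ⟨i, -, hi⟩ := hirr.prime.exists_mem_finset_dvd hdvd
  obtain ⟨u, hu⟩ :=
    (hirr.associated_of_dvd (irreducible_of_isHomogeneous_one (hf0 i) (hf i)) hi).symm
  obtain ⟨c, -, hc⟩ := isUnit_iff_eq_C_of_isReduced.mp u.isUnit
  rw [← hu, hc, mul_comm, C_mul']
  exact Submodule.smul_mem _ c (Submodule.subset_span ⟨i, rfl⟩)

/-- Coordinates on a space `W` of linear forms: `ψ` embeds the polynomials in a basis of `W`, and
`θ` restricts polynomials to a linear subspace complementary to the zero locus of `W`. -/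
lemma exists_algHom_retraction_of_le_homogeneousSubmodule (W : Submodule k (MvPolynomial σ k))
    [FiniteDimensional k W] (hW : W ≤ homogeneousSubmodule σ k 1) :
    ∃ (θ : MvPolynomial σ k →ₐ[k] MvPolynomial (Fin (Module.finrank k W)) k)
      (ψ : MvPolynomial (Fin (Module.finrank k W)) k →ₐ[k] MvPolynomial σ k),
      (∀ α, α.IsHomogeneous 1 → (θ α).IsHomogeneous 1) ∧ (∀ P, θ (ψ P) = P) ∧
        (∀ j, ψ (X j) ∈ W) ∧ ∀ α ∈ W, ψ (θ α) = α := by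
  let b := Module.finBasis k W
  obtain ⟨T, hT⟩ := LinearMap.exists_extend (b.constr k fun j =>
    (⟨X j, isHomogeneous_X k j⟩ : homogeneousSubmodule (Fin (Module.finrank k W)) k 1))
  let θ : MvPolynomial σ k →ₐ[k] MvPolynomial (Fin (Module.finrank k W)) k :=
    aeval fun s => (T (X s)).1
  let ψ : MvPolynomial (Fin (Module.finrank k W)) k →ₐ[k] MvPolynomial σ k :=
    aeval fun j => (b j : MvPolynomial σ k)
  have hθT : ∀ α ∈ homogeneousSubmodule σ k 1, θ α = T α := fun α hα => by
    rw [homogeneousSubmodule_one_eq_span_X] at hα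
    refine LinearMap.eqOn_span (f := θ.toLinearMap) (g := Submodule.subtype _ ∘ₗ T) ?_ hα
    rintro _ ⟨s, rfl⟩
    simp [θ]
  have hθb : ∀ j, θ (b j) = X j := fun j => by
    have hTb := LinearMap.congr_fun hT (b j)
    rw [LinearMap.comp_apply, Submodule.subtype_apply, Module.Basis.constr_basis] at hTb
    rw [hθT _ (hW (b j).2), hTb]
  have hψX : ∀ j, ψ (X j) = b j := aeval_X _
  have hψθ : (ψ.toLinearMap ∘ₗ θ.toLinearMap) ∘ₗ W.subtype = W.subtype :=
    b.ext fun j => by simp [hθb, hψX]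
  refine ⟨θ, ψ, fun α hα => ?_, fun P => ?_, fun j => hψX j ▸ (b j).2, fun α hα =>
    LinearMap.congr_fun hψθ ⟨α, hα⟩⟩
  · exact hα.aeval (fun s => (T (X s)).1) fun s => (T (X s)).2
  · have hid : θ.comp ψ = AlgHom.id k _ := algHom_ext fun j => by simp [hθb, hψX]
    exact DFunLike.congr_fun hid P

lemma finrank_span_le_five_of_prod_add_prod_eq_prod [CharZero k] [Fintype κ]
    {f g h : κ → MvPolynomial σ k} {p q : k}
    (hf : ∀ i, (f i).IsHomogeneous 1) (hg : ∀ i, (g i).IsHomogeneous 1)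
    (hh : ∀ i, (h i).IsHomogeneous 1) (hf0 : ∀ i, f i ≠ 0) (hg0 : ∀ i, g i ≠ 0)
    (hh0 : ∀ i, h i ≠ 0) (hfg : IsRelPrime (∏ i, f i) (∏ i, g i)) (hp : p ≠ 0) (hq : q ≠ 0)
    (hpencil : C p * ∏ i, f i + C q * ∏ i, g i = ∏ i, h i) :
    Module.finrank k (Submodule.span k (Set.range f ∪ Set.range g)) ≤ 5 := by
  let W := Submodule.span k (Set.range f ∪ Set.range g)
  have hW : W ≤ homogeneousSubmodule σ k 1 := by
    rw [Submodule.span_le]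
    rintro _ (⟨i, rfl⟩ | ⟨i, rfl⟩)
    exacts [hf i, hg i]
  have : FiniteDimensional k W :=
    FiniteDimensional.span_of_finite k ((Set.finite_range f).union (Set.finite_range g))
  obtain ⟨θ, ψ, hθ, hθψ, hψX, hψθ⟩ := exists_algHom_retraction_of_le_homogeneousSubmodule W hW
  have hfW : ∀ i, f i ∈ W := fun i => Submodule.subset_span (Or.inl ⟨i, rfl⟩)
  have hgW : ∀ i, g i ∈ W := fun i => Submodule.subset_span (Or.inr ⟨i, rfl⟩)
  have hψprod : ∀ l : κ → MvPolynomial σ k, (∀ i, l i ∈ W) → ψ (∏ i, θ (l i)) = ∏ i, l i :=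
    fun l hl => by rw [map_prod]; exact Finset.prod_congr rfl fun i _ => hψθ _ (hl i)
  have hpencilθ : C p * ∏ i, θ (f i) + C q * ∏ i, θ (g i) = ∏ i, θ (h i) := by
    simpa only [map_add, map_mul, map_prod, algHom_C, algebraMap_eq] using congrArg θ hpencil
  have hψh : ψ (∏ i, θ (h i)) = ∏ i, h i := by
    rw [← hpencilθ, map_add, map_mul, map_mul, hψprod f hfW, hψprod g hgW, algHom_C, algHom_C,
      algebraMap_eq, hpencil]
  have hθne : ∀ {l : κ → MvPolynomial σ k}, (∀ i, l i ≠ 0) → ψ (∏ i, θ (l i)) = ∏ i, l i →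
      ∀ i, θ (l i) ≠ 0 := fun {l} hl0 hl i hi =>
    Finset.prod_ne_zero_iff.mpr (fun i _ => hl0 i)
      (by rw [← hl, Finset.prod_eq_zero (Finset.mem_univ i) hi, map_zero])
  have hfgθ : IsRelPrime (∏ i, θ (f i)) (∏ i, θ (g i)) := fun r hrf hrg => by
    have hr := hfg (hψprod f hfW ▸ map_dvd ψ hrf) (hψprod g hgW ▸ map_dvd ψ hrg)
    simpa only [hθψ] using hr.map θ
  have hspan : ∀ j, X j ∈ Submodule.span k (Set.range (θ ∘ f) ∪ Set.range (θ ∘ g)) := fun j => by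
    rw [← hθψ (X j), Set.range_comp, Set.range_comp, ← Set.image_union]
    exact Submodule.apply_mem_span_image_of_mem_span θ.toLinearMap (hψX j)
  simpa only [Fintype.card_fin] using card_le_five_of_prod_add_prod_eq_prod (f := θ ∘ f)
    (g := θ ∘ g) (h := θ ∘ h) (fun i => hθ _ (hf i)) (fun i => hθ _ (hg i)) (fun i => hθ _ (hh i))
    (hθne hf0 (hψprod f hfW)) (hθne hg0 (hψprod g hgW)) (hθne hh0 hψh) hfgθ hp hq hpencilθ hspan

lemma exists_fst_ne_zero_and_snd_ne_zero_of_mul_ne_mul (c : Fin 3 → k × k)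
    (hc : ∀ i j, i ≠ j → (c i).1 * (c j).2 ≠ (c i).2 * (c j).1) :
    ∃ i, (c i).1 ≠ 0 ∧ (c i).2 ≠ 0 := by
  by_contra! h
  have h01 := hc 0 1 (by decide)
  have h02 := hc 0 2 (by decide)
  have h12 := hc 1 2 (by decide)
  by_cases h0 : (c 0).1 = 0 <;> by_cases h1 : (c 1).1 = 0 <;> by_cases h2 : (c 2).1 = 0 <;>
    simp_all

theorem pencil_more_than_two_completely_reducible_fibers_general [CharZero k] {d : ℕ}
    {F G : MvPolynomial σ k} (hF : F.IsHomogeneous d) (hG : G.IsHomogeneous d)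
    (hFcr : IsProdOfLinearForms F) (hGcr : IsProdOfLinearForms G) (hFG : IsRelPrime F G)
    {p q : k} (hp : p ≠ 0) (hq : q ≠ 0) (hHcr : IsProdOfLinearForms (C p * F + C q * G)) :
    Module.rank k
      (Submodule.span k {α | (α ≠ 0 ∧ α.IsHomogeneous 1) ∧ (α ∣ F ∨ α ∣ G)}) ≤ 5 := by
  obtain ⟨h, hh0, hh, hH⟩ := hHcr.exists_eq_prod ((hF.C_mul p).add (hG.C_mul q))
  obtain ⟨f, hf0, hf, rfl⟩ := hFcr.exists_eq_prod hF
  obtain ⟨g, hg0, hg, rfl⟩ := hGcr.exists_eq_prod hG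
  have hle : Submodule.span k {α | (α ≠ 0 ∧ α.IsHomogeneous 1) ∧ (α ∣ ∏ i, f i ∨ α ∣ ∏ i, g i)} ≤
      Submodule.span k (Set.range f ∪ Set.range g) := by
    rw [Submodule.span_le]
    rintro α ⟨⟨hα0, hα⟩, hdvd | hdvd⟩
    · exact Submodule.span_mono Set.subset_union_left
        (mem_span_range_of_dvd_prod hα0 hα hf0 hf hdvd)
    · exact Submodule.span_mono Set.subset_union_right
        (mem_span_range_of_dvd_prod hα0 hα hg0 hg hdvd)
  have : FiniteDimensional k (Submodule.span k (Set.range f ∪ Set.range g)) :=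
    FiniteDimensional.span_of_finite k ((Set.finite_range f).union (Set.finite_range g))
  refine (Submodule.rank_mono hle).trans ?_
  rw [← Module.finrank_eq_rank]
  exact_mod_cast finrank_span_le_five_of_prod_add_prod_eq_prod hf hg hh hf0 hg0 hh0 hFG hp hq hH

end LinearFactors

/-- If a pencil on ℙⁿ with irreducible generic fiber has more than 2 pairwise distinct
completely reducible members, then the linear factors of F and G span a subspace of
dimension at most 5 (the pencil is a linear pull-back of a pencil on ℙ⁴). -/
theorem pencil_more_than_two_completely_reducible_fibers
    (n d : ℕ) (hn : 1 ≤ n) (hd : 1 ≤ d)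
    (F G : MvPolynomial (Fin (n + 1)) ℂ)
    (hF : F.IsHomogeneous d) (hG : G.IsHomogeneous d)
    (hFcr : CompletelyReducible n F) (hGcr : CompletelyReducible n G)
    (hcop : RelPrime n F G)
    (hgen : GenericFiberIrreducible n F G)
    (c : Fin 3 → ℂ × ℂ)
    (hprop : ∀ i j, i ≠ j → (c i).1 * (c j).2 ≠ (c i).2 * (c j).1)
    (hcr : ∀ i, CompletelyReducible n (C (c i).1 * F + C (c i).2 * G)) :
    Module.rank ℂ
      ↥(Submodule.span ℂ
        {α : MvPolynomial (Fin (n + 1)) ℂ | IsLinearForm n α ∧ (α ∣ F ∨ α ∣ G)}) ≤ 5 := by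
  obtain ⟨i, hp, hq⟩ := exists_fst_ne_zero_and_snd_ne_zero_of_mul_ne_mul c hprop
  exact pencil_more_than_two_completely_reducible_fibers_general hF hG hFcr hGcr
    (fun r => hcop r) hp hq (hcr i)
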